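/- For every integer d ≥ 0, there exists a real number ε > 0 as follows: if G is a finite graph of maximum average degree less than d + 1 + 2/(d+4), then G with any list assignment in which every list has size d+2 is weighted ε-flexible. -/

import Mathlib

def IsLColoring {V : Type*} (G : SimpleGraph V) (L : V → Finset ℕ) (φ : V → ℕ) : Prop :=
  (∀ v, φ v ∈ L v) ∧ ∀ ⦃u w : V⦄, G.Adj u w → φ u ≠ φ w

def WeightTotal {V : Type*} [Fintype V] (L : V → Finset ℕ) (w : V → ℕ → ℝ) : ℝ :=
  ∑ v, ∑ c ∈ L v, w v c

def WEpsSat {V : Type*} [Fintype V] (G : SimpleGraph V) (L : V → Finset ℕ)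
    (w : V → ℕ → ℝ) (ε : ℝ) : Prop :=
  ∃ φ : V → ℕ, IsLColoring G L φ ∧ ε * WeightTotal L w ≤ ∑ v, w v (φ v)

def WFlexible {V : Type*} [Fintype V] (G : SimpleGraph V) (L : V → Finset ℕ) (ε : ℝ) : Prop :=
  ∀ w : V → ℕ → ℝ, (∀ v c, 0 ≤ w v c) → WEpsSat G L w ε

/-- The maximum average degree of `G` is less than `x`: every non-null subgraph `H`
satisfies `2|E(H)| < x·|V(H)|`. -/
def MadLT {V : Type*} (G : SimpleGraph V) (x : ℝ) : Prop :=
  ∀ H : G.Subgraph, H.verts.Nonempty → 2 * (H.edgeSet.ncard : ℝ) < x * H.verts.ncard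

open Classical in
noncomputable def dgIn {V : Type} (G : SimpleGraph V) (A : Finset V) (v : V) : ℕ :=
  (A.filter (fun u => G.Adj v u)).card

def PropOn {V : Type} (G : SimpleGraph V) (A : Finset V) (φ : V → ℕ) : Prop :=
  ∀ u ∈ A, ∀ w ∈ A, G.Adj u w → φ u ≠ φ w

lemma dgIn_mono {V : Type} (G : SimpleGraph V) {A B : Finset V} (h : A ⊆ B) (v : V) :
    dgIn G A v ≤ dgIn G B v := by
  classical
  exact Finset.card_le_card (Finset.filter_subset_filter _ h)

open Classical in
lemma dgIn_sdiff {V : Type} (G : SimpleGraph V) {A B : Finset V} (h : A ⊆ B) (v : V) :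
    dgIn G (B \ A) v + dgIn G A v = dgIn G B v := by
  unfold dgIn
  rw [← Finset.card_union_of_disjoint, ← Finset.filter_union, Finset.sdiff_union_of_subset h]
  exact Finset.disjoint_filter_filter Finset.sdiff_disjoint

lemma dgIn_lt {V : Type} (G : SimpleGraph V) {A B : Finset V} (h : A ⊆ B) {v w : V}
    (hw : w ∈ B) (hwA : w ∉ A) (hvw : G.Adj v w) :
    dgIn G A v < dgIn G B v := by
  classical
  apply Finset.card_lt_card
  refine ⟨Finset.filter_subset_filter _ h, fun hh => hwA ?_⟩
  exact (Finset.mem_filter.1 (hh (Finset.mem_filter.2 ⟨hw, hvw⟩))).1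

open Classical in
lemma dgIn_sum {V : Type} [Fintype V] (G : SimpleGraph V) (x : ℝ) (hG : MadLT G x)
    (A : Finset V) (hA : A.Nonempty) :
    ((∑ v ∈ A, dgIn G A v : ℕ) : ℝ) < x * A.card := by
  let H : G.Subgraph := (⊤ : G.Subgraph).induce (A : Set V)
  have h := hG H (by simpa [H] using hA)
  have h1 : H.verts.ncard = A.card := by simp [H, Set.ncard_coe_finset]
  have h2 := H.spanningCoe.sum_degrees_eq_twice_card_edges
  have h3 : H.spanningCoe.edgeFinset.card = H.edgeSet.ncard := by
    rw [← Set.ncard_coe_finset, SimpleGraph.coe_edgeFinset, SimpleGraph.Subgraph.edgeSet_spanningCoe]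
  have h4 : ∑ v, H.spanningCoe.degree v = ∑ v ∈ A, dgIn G A v := by
    rw [← Finset.sum_subset (Finset.subset_univ A)]
    · apply Finset.sum_congr rfl
      intro v hv
      unfold dgIn
      rw [← SimpleGraph.card_neighborFinset_eq_degree]
      congr 1
      ext u
      simp [H, hv]
    · intro v _ hv
      rw [← SimpleGraph.card_neighborFinset_eq_degree, Finset.card_eq_zero]
      ext u
      simp [H, hv]
  rw [h1] at h
  rw [← h4, h2, h3]
  push_cast
  exact h

lemma ext_col {V : Type} (G : SimpleGraph V) (M : V → Finset ℕ) (φ : V → ℕ) :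
    ∀ (n : ℕ) (T : Finset V), T.card = n →
      (∀ T' ⊆ T, T'.Nonempty → ∃ u ∈ T', dgIn G T' u < (M u).card) →
      ∃ ψ : V → ℕ, (∀ u, u ∉ T → ψ u = φ u) ∧ (∀ u ∈ T, ψ u ∈ M u) ∧ PropOn G T ψ := by
  classical
  intro n
  induction n with
  | zero =>
    intro T hT _
    rw [Finset.card_eq_zero] at hT
    subst hT
    exact ⟨φ, by simp, by simp, by simp [PropOn]⟩
  | succ n ih =>
    intro T hT h
    obtain ⟨u, huT, hu⟩ := h T subset_rfl (Finset.card_pos.1 (by omega))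
    obtain ⟨ψ, h1, h2, h3⟩ := ih (T.erase u) (by rw [Finset.card_erase_of_mem huT]; omega)
      (fun T' hT' => h T' (hT'.trans (Finset.erase_subset _ _)))
    have : ∃ c ∈ M u, c ∉ (T.filter (fun w => G.Adj u w)).image ψ := by
      apply Finset.exists_mem_notMem_of_card_lt_card
      exact lt_of_le_of_lt Finset.card_image_le hu
    obtain ⟨c, hc, hc'⟩ := this
    have hc2 : ∀ w ∈ T, G.Adj u w → ψ w ≠ c := by
      intro w hw hadj he
      exact hc' (Finset.mem_image.2 ⟨w, Finset.mem_filter.2 ⟨hw, hadj⟩, he⟩)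
    refine ⟨Function.update ψ u c, ?_, ?_, ?_⟩
    · intro w hw
      have hwu : w ≠ u := fun e => hw (e ▸ huT)
      rw [Function.update_of_ne hwu]
      exact h1 w (fun e => hw (Finset.mem_of_mem_erase e))
    · intro w hw
      by_cases hwu : w = u
      · subst hwu; simpa using hc
      · rw [Function.update_of_ne hwu]
        exact h2 w (Finset.mem_erase.2 ⟨hwu, hw⟩)
    · intro a ha b hb hab
      by_cases hau : a = u
      · subst hau
        have hba : b ≠ a := hab.ne'
        rw [Function.update_self, Function.update_of_ne hba]
        exact (hc2 b hb hab).symm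
      · by_cases hbu : b = u
        · subst hbu
          rw [Function.update_self, Function.update_of_ne hau]
          exact hc2 a ha hab.symm
        · rw [Function.update_of_ne hau, Function.update_of_ne hbu]
          exact h3 a (Finset.mem_erase.2 ⟨hau, ha⟩) b (Finset.mem_erase.2 ⟨hbu, hb⟩) hab

open Classical in
/-- colors of neighbours of `u` in `B` -/
noncomputable def nbCol {V : Type} (G : SimpleGraph V) (B : Finset V) (φ : V → ℕ) (u : V) :
    Finset ℕ := (B.filter (fun w => G.Adj u w)).image φ

lemma nbCol_card {V : Type} (G : SimpleGraph V) (B : Finset V) (φ : V → ℕ) (u : V) :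
    (nbCol G B φ u).card ≤ dgIn G B u := Finset.card_image_le

lemma step_ext {V : Type} [Fintype V] [DecidableEq V] (G : SimpleGraph V) (L M : V → Finset ℕ)
    (A H : Finset V) (φ : V → ℕ)
    (hφL : ∀ v, φ v ∈ L v) (hφ : PropOn G (A \ H) φ)
    (hM : ∀ u ∈ H, M u ⊆ L u \ nbCol G (A \ H) φ u)
    (hT : ∀ T' ⊆ H, T'.Nonempty → ∃ u ∈ T', dgIn G T' u < (M u).card) :
    ∃ ψ : V → ℕ, (∀ v, ψ v ∈ L v) ∧ (∀ u, u ∉ H → ψ u = φ u) ∧ PropOn G A ψ ∧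
      ∀ u ∈ H, ψ u ∈ M u := by
  classical
  obtain ⟨ψ, h1, h2, h3⟩ := ext_col G M φ _ H rfl hT
  have key : ∀ u ∈ H, ∀ w ∈ A, w ∉ H → G.Adj u w → ψ u ≠ φ w := by
    intro u hu w hw hwH hadj he
    have := hM u hu (h2 u hu)
    rw [Finset.mem_sdiff] at this
    apply this.2
    rw [he]
    exact Finset.mem_image.2 ⟨w, Finset.mem_filter.2 ⟨Finset.mem_sdiff.2 ⟨hw, hwH⟩, hadj⟩, rfl⟩
  refine ⟨ψ, ?_, h1, ?_, h2⟩
  · intro v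
    by_cases hv : v ∈ H
    · exact (Finset.mem_sdiff.1 (hM v hv (h2 v hv))).1
    · rw [h1 v hv]; exact hφL v
  · intro u hu w hw hadj
    by_cases huH : u ∈ H
    · by_cases hwH : w ∈ H
      · exact h3 u huH w hwH hadj
      · rw [h1 w hwH]; exact key u huH w hw hwH hadj
    · by_cases hwH : w ∈ H
      · rw [h1 u huH]; exact (key w hwH u hu huH hadj.symm).symm
      · rw [h1 u huH, h1 w hwH]
        exact hφ u (Finset.mem_sdiff.2 ⟨hu, huH⟩) w (Finset.mem_sdiff.2 ⟨hw, hwH⟩) hadj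

open Classical in
structure Reducible {V : Type} (d : ℕ) (G : SimpleGraph V) (A H : Finset V) : Prop where
  sub : H ⊆ A
  ne : H.Nonempty
  card : H.card ≤ d + 1
  deg : ∀ u ∈ H, dgIn G A u ≤ d + 1
  deg' : ∀ u ∈ H, dgIn G (A \ H) u ≤ d
  forb : ∀ S : Finset V, S.card ≤ d → ∀ T ⊆ H, T.Nonempty →
    ∃ u ∈ T, dgIn G (A \ H) u + dgIn G T u + (if u ∈ S then 1 else 0) < d + 2

open Classical in
lemma exists_reducible {V : Type} [Fintype V] (d : ℕ) (hd : 1 ≤ d) (G : SimpleGraph V)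
    (hG : MadLT G (d + 1 + 2 / (d + 4))) (A : Finset V) (hA : A.Nonempty) :
    ∃ H, Reducible d G A H := by
  by_cases h1 : ∃ v ∈ A, dgIn G A v ≤ d
  · obtain ⟨v, hv, hvd⟩ := h1
    have hsub : ({v} : Finset V) ⊆ A := by simpa using hv
    refine ⟨{v}, hsub, by simp, by simp, ?_, ?_, ?_⟩
    · simp; omega
    · simp only [Finset.mem_singleton, forall_eq]
      exact (dgIn_mono G Finset.sdiff_subset v).trans hvd
    · intro S _ T hT hne
      rw [Finset.Nonempty.subset_singleton_iff hne] at hT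
      subst hT
      refine ⟨v, by simp, ?_⟩
      rw [dgIn_sdiff G hsub]
      split_ifs <;> omega
  push Not at h1
  set B := A.filter (fun v => dgIn G A v = d + 1) with hB
  have hBA : B ⊆ A := Finset.filter_subset _ _
  by_cases h2 : ∃ v ∈ B, d ≤ dgIn G B v
  · obtain ⟨v, hv, hvd⟩ := h2
    obtain ⟨N, hN, hNc⟩ := Finset.exists_subset_card_eq hvd
    have hN' : ∀ w ∈ N, w ∈ B ∧ G.Adj v w := fun w hw => by simpa using hN hw
    have hvN : v ∉ N := fun h => (hN' v h).2.ne rfl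
    have hHB : insert v N ⊆ B := by
      intro w hw
      rcases Finset.mem_insert.1 hw with rfl | hw
      · exact hv
      · exact (hN' w hw).1
    have hHA := hHB.trans hBA
    have hcard : (insert v N).card = d + 1 := by rw [Finset.card_insert_of_notMem hvN, hNc]
    have hdeg : ∀ u ∈ insert v N, dgIn G A u = d + 1 := fun u hu =>
      (Finset.mem_filter.1 (hHB hu)).2
    -- key: every nonempty proper subset has an edge out
    have key : ∀ T ⊆ insert v N, T.Nonempty → T.card ≤ d →
        ∃ u ∈ T, dgIn G T u < dgIn G (insert v N) u := by
      intro T hT hne hc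
      by_cases hvT : v ∈ T
      · obtain ⟨w, hw, hwT⟩ := Finset.exists_mem_notMem_of_card_lt_card
          (show T.card < (insert v N).card by omega)
        have hwv : w ≠ v := fun e => hwT (e ▸ hvT)
        have hwN : w ∈ N := (Finset.mem_insert.1 hw).resolve_left hwv
        exact ⟨v, hvT, dgIn_lt G hT hw hwT (hN' w hwN).2⟩
      · obtain ⟨u, hu⟩ := hne
        have huv : u ≠ v := fun e => hvT (e ▸ hu)
        have huN : u ∈ N := (Finset.mem_insert.1 (hT hu)).resolve_left huv
        exact ⟨u, hu, dgIn_lt G hT (Finset.mem_insert_self _ _) hvT (hN' u huN).2.symm⟩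
    refine ⟨insert v N, hHA, by simp, hcard.le, fun u hu => (hdeg u hu).le, ?_, ?_⟩
    · intro u hu
      obtain ⟨u', hu', hlt⟩ := key {u} (by simpa using hu) (by simp) (by simpa using hd)
      rw [Finset.mem_singleton] at hu'
      subst hu'
      have e1 := dgIn_sdiff G hHA u'
      have e2 := hdeg u' hu
      omega
    · intro S hS T hT hne
      by_cases hTS : T ⊆ S
      · obtain ⟨u, hu, hlt⟩ := key T hT hne ((Finset.card_le_card hTS).trans hS)
        refine ⟨u, hu, ?_⟩
        have e1 := dgIn_sdiff G hHA u
        have e2 := hdeg u (hT hu)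
        split_ifs <;> omega
      · obtain ⟨u, hu, huS⟩ := Finset.not_subset.1 hTS
        refine ⟨u, hu, ?_⟩
        have e1 := dgIn_sdiff G hHA u
        have e2 := hdeg u (hT hu)
        have e3 := dgIn_mono G hT u
        simp only [huS, if_false]
        omega
  exfalso
  push Not at h2
  have hs := dgIn_sum G _ hG A hA
  have e1 : ∀ v ∈ B, 2 ≤ dgIn G (A \ B) v := by
    intro v hv
    have := dgIn_sdiff G hBA v
    have := h2 v hv
    have := (Finset.mem_filter.1 hv).2
    omega
  have e2 : ∑ v ∈ B, dgIn G (A \ B) v = ∑ u ∈ A \ B, dgIn G B u := by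
    have := Finset.sum_card_bipartiteAbove_eq_sum_card_bipartiteBelow (s := B) (t := A \ B)
      (fun u w => G.Adj u w)
    simp only [Finset.bipartiteAbove, Finset.bipartiteBelow] at this
    unfold dgIn
    rw [this]
    simp only [G.adj_comm]
  have e3 : 2 * B.card ≤ ∑ u ∈ A \ B, dgIn G B u := by
    rw [← e2, mul_comm, ← smul_eq_mul]
    exact Finset.card_nsmul_le_sum _ _ _ e1
  have e4 : ∀ u ∈ A \ B, (d + 2) * (d + 3) + dgIn G B u ≤ (d + 4) * dgIn G A u := by
    intro u hu
    obtain ⟨huA, huB⟩ := Finset.mem_sdiff.1 hu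
    have a1 := h1 u huA
    have a2 : dgIn G A u ≠ d + 1 := fun e => huB (Finset.mem_filter.2 ⟨huA, e⟩)
    have a3 := dgIn_mono G hBA u
    have a4 : d + 2 ≤ dgIn G A u := by omega
    nlinarith
  have e5 : (A \ B).card * ((d + 2) * (d + 3)) + ∑ u ∈ A \ B, dgIn G B u
      ≤ (d + 4) * ∑ u ∈ A \ B, dgIn G A u := by
    rw [Finset.mul_sum, ← smul_eq_mul, ← Finset.sum_const, ← Finset.sum_add_distrib]
    exact Finset.sum_le_sum e4
  have e6 : ∑ u ∈ B, dgIn G A u = B.card * (d + 1) := by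
    rw [← smul_eq_mul, ← Finset.sum_const]
    exact Finset.sum_congr rfl (fun u hu => (Finset.mem_filter.1 hu).2)
  have e7 := Finset.sum_sdiff (f := fun u => dgIn G A u) hBA
  have e8 := Finset.card_sdiff_add_card_eq_card hBA
  have e9 : A.card * ((d + 2) * (d + 3)) ≤ (d + 4) * ∑ u ∈ A, dgIn G A u := by
    rw [← e7, ← e8, mul_add, e6]
    nlinarith
  have e10 : ((A.card * ((d + 2) * (d + 3)) : ℕ) : ℝ) ≤ ((d + 4) * ∑ u ∈ A, dgIn G A u : ℕ) := by
    exact_mod_cast e9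
  rw [Nat.cast_mul (d + 4)] at e10
  push_cast at e10 hs
  have hd4 : (0 : ℝ) < d + 4 := by positivity
  have e11 := mul_lt_mul_of_pos_left hs hd4
  have e12 : ((d : ℝ) + 4) * ((d + 1 + 2 / (d + 4)) * A.card) = A.card * ((d + 2) * (d + 3)) := by
    field_simp
    ring
  linarith

open Classical in
noncomputable def PrS {α : Type} (Ω : Finset α) (p : α → ℝ) (X : α → Prop) : ℝ :=
  ∑ a ∈ Ω.filter X, p a

open Classical in
lemma transfer {α : Type} (Ω : Finset α) (p : α → ℝ) (hp : ∀ a, 0 ≤ p a) (E : α → Finset α)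
    (hE : ∀ a, E a ⊆ Ω) :
    ∃ p' : α → ℝ, (∀ a, 0 ≤ p' a) ∧ (∀ b, p' b ≠ 0 → ∃ a, b ∈ E a) ∧
      ((∀ a ∈ Ω, p a ≠ 0 → (E a).Nonempty) → ∑ b ∈ Ω, p' b = ∑ a ∈ Ω, p a) ∧
      ∀ (X Y : α → Prop) (r : ℝ),
        (∀ a ∈ Ω, p a ≠ 0 → Y a → r ≤ ((E a).filter X).card / ((E a).card : ℝ)) →
        r * PrS Ω p Y ≤ PrS Ω p' X := by
  have main : ∀ X : α → Prop,
      ∑ b ∈ Ω.filter X, ∑ a ∈ Ω, (if b ∈ E a then p a / ((E a).card : ℝ) else 0) =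
      ∑ a ∈ Ω, p a * (((E a).filter X).card / ((E a).card : ℝ)) := by
    intro X
    rw [Finset.sum_comm]
    apply Finset.sum_congr rfl
    intro a _
    rw [← Finset.sum_filter, Finset.sum_const, nsmul_eq_mul]
    have : (Ω.filter X).filter (fun b => b ∈ E a) = (E a).filter X := by
      ext b
      simp only [Finset.mem_filter]
      constructor
      · rintro ⟨⟨_, h⟩, h'⟩; exact ⟨h', h⟩
      · rintro ⟨h', h⟩; exact ⟨⟨hE a h', h⟩, h'⟩
    rw [this]
    ring
  refine ⟨fun b => ∑ a ∈ Ω, (if b ∈ E a then p a / ((E a).card : ℝ) else 0), ?_, ?_, ?_, ?_⟩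
  · intro b
    apply Finset.sum_nonneg
    intro a _
    split_ifs
    · exact div_nonneg (hp a) (Nat.cast_nonneg _)
    · exact le_rfl
  · intro b hb
    obtain ⟨a, _, ha⟩ := Finset.exists_ne_zero_of_sum_ne_zero hb
    refine ⟨a, ?_⟩
    by_contra h
    simp [h] at ha
  · intro hne
    have := main (fun _ => True)
    simp only [Finset.filter_true] at this
    rw [this]
    apply Finset.sum_congr rfl
    intro a ha
    by_cases h0 : p a = 0
    · simp [h0]
    · have : ((E a).card : ℝ) ≠ 0 := by
        exact_mod_cast (Finset.card_pos.2 (hne a ha h0)).ne'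
      rw [div_self this, mul_one]
  · intro X Y r hr
    unfold PrS
    rw [main X, Finset.mul_sum, Finset.sum_filter]
    apply Finset.sum_le_sum
    intro a ha
    have h0 : 0 ≤ p a * (((E a).filter X).card / ((E a).card : ℝ)) :=
      mul_nonneg (hp a) (by positivity)
    split_ifs with hY
    · by_cases hpa : p a = 0
      · simp [hpa]
      · rw [mul_comm]
        exact mul_le_mul_of_nonneg_left (hr a ha hpa hY) (hp a)
    · exact h0

open Classical in
structure GoodDist {V : Type} [Fintype V] (d : ℕ) (δ : ℝ) (G : SimpleGraph V) (L : V → Finset ℕ)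
    (A : Finset V) (p : (V → ℕ) → ℝ) : Prop where
  nonneg : ∀ φ, 0 ≤ p φ
  sum_one : ∑ φ ∈ Fintype.piFinset L, p φ = 1
  proper : ∀ φ, p φ ≠ 0 → PropOn G A φ
  fixc : ∀ v ∈ A, ∀ c ∈ L v,
    δ ^ (d + 1) ≤ PrS (Fintype.piFinset L) p (fun φ => φ v = c)
  forb : ∀ S ⊆ A, S.card ≤ d → ∀ c : ℕ,
    δ ^ S.card ≤ PrS (Fintype.piFinset L) p (fun φ => ∀ u ∈ S, φ u ≠ c)

open Classical in
lemma good_step {V : Type} [Fintype V] (d : ℕ) (δ : ℝ)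
    (hδ : δ = 1 / ((d : ℝ) + 2) ^ (d + 1)) (G : SimpleGraph V)
    (L : V → Finset ℕ) (hL : ∀ v, (L v).card = d + 2) (A H : Finset V)
    (hH : Reducible d G A H) (p : (V → ℕ) → ℝ) (hp : GoodDist d δ G L (A \ H) p) :
    ∃ p', GoodDist d δ G L A p' := by
  have hδ0 : 0 < δ := by rw [hδ]; positivity
  have hδ1 : δ ≤ 1 := by
    rw [hδ]
    apply div_le_one_of_le₀ _ (by positivity)
    apply one_le_pow₀
    have : (0 : ℝ) ≤ d := Nat.cast_nonneg d
    linarith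
  set Ω := Fintype.piFinset L with hΩ
  let E : (V → ℕ) → Finset (V → ℕ) := fun φ =>
    Ω.filter (fun ψ => (∀ u, u ∉ H → ψ u = φ u) ∧ PropOn G A ψ)
  have hEmem : ∀ φ ψ, ψ ∈ E φ ↔ (∀ v, ψ v ∈ L v) ∧ (∀ u, u ∉ H → ψ u = φ u) ∧ PropOn G A ψ := by
    intro φ ψ
    simp [E, hΩ, Fintype.mem_piFinset]
  have hEcard : ∀ φ, ((E φ).card : ℝ) ≤ ((d : ℝ) + 2) ^ (d + 1) := by
    intro φ
    have h1 : E φ ⊆ Fintype.piFinset (fun v => if v ∈ H then L v else {φ v}) := by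
      intro ψ hψ
      obtain ⟨a, b, _⟩ := (hEmem φ ψ).1 hψ
      rw [Fintype.mem_piFinset]
      intro v
      split_ifs with hv
      · exact a v
      · simpa using b v hv
    have h2 : (E φ).card ≤ (d + 2) ^ (d + 1) := by
      refine (Finset.card_le_card h1).trans ?_
      rw [Fintype.card_piFinset]
      have : ∀ v, (if v ∈ H then L v else {φ v}).card = if v ∈ H then d + 2 else 1 := by
        intro v; split_ifs
        · exact hL v
        · simp
      rw [Finset.prod_congr rfl (fun v _ => this v), Finset.prod_ite]
      simp only [Finset.prod_const, one_pow, mul_one]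
      apply Nat.pow_le_pow_right (by omega)
      simpa using hH.card
    exact_mod_cast h2
  have hcount : ∀ φ (X : (V → ℕ) → Prop), (∃ ψ ∈ E φ, X ψ) →
      δ ≤ ((E φ).filter X).card / ((E φ).card : ℝ) := by
    rintro φ X ⟨ψ, hψ, hX⟩
    have h1 : (1 : ℝ) ≤ ((E φ).filter X).card := by
      exact_mod_cast Finset.card_pos.2 ⟨ψ, Finset.mem_filter.2 ⟨hψ, hX⟩⟩
    have h2 : (0 : ℝ) < (E φ).card := by
      exact_mod_cast Finset.card_pos.2 ⟨ψ, hψ⟩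
    rw [hδ]
    exact div_le_div₀ (by positivity) h1 h2 (hEcard φ)
  have hML : ∀ φ u, d + 2 ≤ (L u \ nbCol G (A \ H) φ u).card + dgIn G (A \ H) u := by
    intro φ u
    have a1 := nbCol_card G (A \ H) φ u
    have a2 := Finset.le_card_sdiff (nbCol G (A \ H) φ u) (L u)
    rw [hL] at a2
    omega
  have hforb : ∀ φ ∈ Ω, p φ ≠ 0 → ∀ S : Finset V, S.card ≤ d → ∀ c : ℕ,
      ∃ ψ ∈ E φ, ∀ u ∈ H, u ∈ S → ψ u ≠ c := by
    intro φ hφ hpφ S hS c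
    obtain ⟨ψ, a, b, e, f⟩ := step_ext G L
      (fun u => (L u \ nbCol G (A \ H) φ u) \ (if u ∈ S then {c} else ∅)) A H φ
      (Fintype.mem_piFinset.1 hφ) (hp.proper φ hpφ)
      (fun u _ => Finset.sdiff_subset) (by
        intro T hT hne
        obtain ⟨u, hu, hlt⟩ := hH.forb S hS T hT hne
        refine ⟨u, hu, ?_⟩
        have a1 := hML φ u
        have a2 := Finset.le_card_sdiff (if u ∈ S then {c} else ∅) (L u \ nbCol G (A \ H) φ u)
        have a3 : (if u ∈ S then ({c} : Finset ℕ) else ∅).card = if u ∈ S then 1 else 0 := by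
          split_ifs <;> simp
        rw [a3] at a2
        omega)
    refine ⟨ψ, (hEmem φ ψ).2 ⟨a, b, e⟩, ?_⟩
    intro u hu huS hc
    have := f u hu
    simp [huS, hc] at this
  have hne : ∀ φ ∈ Ω, p φ ≠ 0 → (E φ).Nonempty := by
    intro φ h1 h2
    obtain ⟨ψ, h, _⟩ := hforb φ h1 h2 ∅ (by simp) 0
    exact ⟨ψ, h⟩
  have hfix : ∀ φ ∈ Ω, p φ ≠ 0 → ∀ v ∈ H, ∀ c ∈ L v,
      (∀ u ∈ (A \ H).filter (fun w => G.Adj v w), φ u ≠ c) → ∃ ψ ∈ E φ, ψ v = c := by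
    intro φ hφ hpφ v hv c hc hav
    obtain ⟨ψ, a, b, e, f⟩ := step_ext G L
      (fun u => if u = v then {c} else (L u \ nbCol G (A \ H) φ u)) A H φ
      (Fintype.mem_piFinset.1 hφ) (hp.proper φ hpφ)
      (by
        intro u hu
        by_cases huv : u = v
        · subst huv
          simp only [if_true, Finset.singleton_subset_iff, Finset.mem_sdiff]
          refine ⟨hc, fun h => ?_⟩
          obtain ⟨w, hw, hwc⟩ := Finset.mem_image.1 h
          exact hav w hw hwc
        · simp [huv]) (by
        intro T hT hne
        by_cases hTv : T = {v}
        · refine ⟨v, by simp [hTv], ?_⟩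
          simp [hTv, dgIn, Finset.filter_singleton]
        · have : ∃ u ∈ T, u ≠ v := by
            by_contra hcon
            push Not at hcon
            exact hTv (Finset.eq_singleton_iff_nonempty_unique_mem.2 ⟨hne, hcon⟩)
          obtain ⟨u, hu, huv⟩ := this
          refine ⟨u, hu, ?_⟩
          simp only [huv, if_false]
          have a1 := hML φ u
          have a2 := dgIn_mono G hT u
          have a3 := dgIn_sdiff G hH.sub u
          have a4 := hH.deg u (hT hu)
          omega)
    refine ⟨ψ, (hEmem φ ψ).2 ⟨a, b, e⟩, ?_⟩
    simpa using f v hv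
  obtain ⟨p', q1, q2, q3, q4⟩ := transfer Ω p hp.nonneg E (fun φ => Finset.filter_subset _ _)
  have qfull : ∀ (X Y : (V → ℕ) → Prop), (∀ φ ∈ Ω, p φ ≠ 0 → Y φ → ∀ ψ ∈ E φ, X ψ) →
      PrS Ω p Y ≤ PrS Ω p' X := by
    intro X Y h
    have := q4 X Y 1 (by
      intro φ h1 h2 h3
      rw [Finset.filter_true_of_mem (h φ h1 h2 h3), div_self]
      exact_mod_cast (Finset.card_pos.2 (hne φ h1 h2)).ne')
    rwa [one_mul] at this
  refine ⟨p', q1, (q3 hne).trans hp.sum_one, ?_, ?_, ?_⟩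
  · intro ψ hψ
    obtain ⟨φ, h⟩ := q2 ψ hψ
    exact ((hEmem φ ψ).1 h).2.2
  · intro v hv c hc
    by_cases hvH : v ∈ H
    · have h1 := q4 (fun ψ => ψ v = c)
        (fun φ => ∀ u ∈ (A \ H).filter (fun w => G.Adj v w), φ u ≠ c) δ
        (fun φ a b e => hcount φ _ (hfix φ a b v hvH c hc e))
      have hcd : ((A \ H).filter (fun w => G.Adj v w)).card ≤ d := hH.deg' v hvH
      have h2 := hp.forb _ (Finset.filter_subset (fun w => G.Adj v w) (A \ H)) hcd c
      refine le_trans ?_ h1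
      rw [pow_succ, mul_comm]
      apply mul_le_mul_of_nonneg_left _ hδ0.le
      exact (pow_le_pow_of_le_one hδ0.le hδ1 hcd).trans h2
    · refine (hp.fixc v (Finset.mem_sdiff.2 ⟨hv, hvH⟩) c hc).trans ?_
      apply qfull
      intro φ _ _ hY ψ hψ
      rw [((hEmem φ ψ).1 hψ).2.1 v hvH]
      exact hY
  · intro S hSA hS c
    have hsub : S \ H ⊆ A \ H := Finset.sdiff_subset_sdiff hSA subset_rfl
    have hcl : (S \ H).card ≤ S.card := Finset.card_le_card Finset.sdiff_subset
    have h2 := hp.forb (S \ H) hsub (hcl.trans hS) c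
    by_cases hSH : S \ H = S
    · rw [hSH] at h2
      refine h2.trans (qfull _ _ ?_)
      intro φ _ _ hY ψ hψ u hu
      have huH : u ∉ H := by
        rw [← hSH] at hu
        exact (Finset.mem_sdiff.1 hu).2
      rw [((hEmem φ ψ).1 hψ).2.1 u huH]
      exact hY u hu
    · have hlt : (S \ H).card < S.card :=
        Finset.card_lt_card (lt_of_le_of_ne Finset.sdiff_subset hSH)
      have h1 := q4 (fun ψ => ∀ u ∈ S, ψ u ≠ c) (fun φ => ∀ u ∈ S \ H, φ u ≠ c) δ (by
        intro φ a b e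
        apply hcount
        obtain ⟨ψ, hψ, hψ'⟩ := hforb φ a b S hS c
        refine ⟨ψ, hψ, ?_⟩
        intro u hu
        by_cases huH : u ∈ H
        · exact hψ' u huH hu
        · rw [((hEmem φ ψ).1 hψ).2.1 u huH]
          exact e u (Finset.mem_sdiff.2 ⟨hu, huH⟩))
      refine le_trans ?_ h1
      calc δ ^ S.card ≤ δ ^ ((S \ H).card + 1) := pow_le_pow_of_le_one hδ0.le hδ1 hlt
        _ = δ * δ ^ (S \ H).card := by ring
        _ ≤ _ := mul_le_mul_of_nonneg_left h2 hδ0.le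

open Classical in
lemma good_all {V : Type} [Fintype V] (d : ℕ) (hd : 1 ≤ d) (δ : ℝ)
    (hδ : δ = 1 / ((d : ℝ) + 2) ^ (d + 1)) (G : SimpleGraph V)
    (hG : MadLT G (d + 1 + 2 / (d + 4)))
    (L : V → Finset ℕ) (hL : ∀ v, (L v).card = d + 2) (A : Finset V) :
    ∃ p, GoodDist d δ G L A p := by
  induction A using Finset.strongInduction with
  | H A ih =>
    by_cases hA : A.Nonempty
    · obtain ⟨H, hH⟩ := exists_reducible d hd G hG A hA
      obtain ⟨p, hp⟩ := ih (A \ H) (Finset.sdiff_ssubset hH.sub hH.ne)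
      exact good_step d δ hδ G L hL A H hH p hp
    · rw [Finset.not_nonempty_iff_eq_empty] at hA
      subst hA
      have : ∀ v, ∃ c, c ∈ L v := fun v => Finset.card_pos.1 (by rw [hL]; omega)
      choose φ₀ hφ₀ using this
      have hm : φ₀ ∈ Fintype.piFinset L := Fintype.mem_piFinset.2 hφ₀
      have hs : ∑ φ ∈ Fintype.piFinset L, (if φ = φ₀ then (1 : ℝ) else 0) = 1 := by
        rw [Finset.sum_ite_eq' _ φ₀ (fun _ => (1 : ℝ)), if_pos hm]
      refine ⟨fun φ => if φ = φ₀ then 1 else 0, ?_, hs, ?_, ?_, ?_⟩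
      · intro φ; split_ifs <;> norm_num
      · intro φ _; simp [PropOn]
      · simp
      · intro S hS _ c
        rw [Finset.subset_empty] at hS
        subst hS
        simpa [PrS] using hs.ge

lemma flex_of_good {V : Type} [Fintype V] (d : ℕ) (δ : ℝ) (G : SimpleGraph V) (L : V → Finset ℕ)
    (p : (V → ℕ) → ℝ) (hp : GoodDist d δ G L Finset.univ p) :
    WFlexible G L (δ ^ (d + 1)) := by
  classical
  intro w hw
  set Ω := Fintype.piFinset L with hΩ
  have h1 : δ ^ (d + 1) * WeightTotal L w ≤ ∑ φ ∈ Ω, p φ * ∑ v, w v (φ v) := by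
    have e : ∑ φ ∈ Ω, p φ * ∑ v, w v (φ v) =
        ∑ v, ∑ c ∈ L v, w v c * ∑ φ ∈ Ω.filter (fun φ => φ v = c), p φ := by
      simp only [Finset.mul_sum]
      rw [Finset.sum_comm]
      apply Finset.sum_congr rfl
      intro v _
      rw [← Finset.sum_fiberwise_of_maps_to (s := Ω) (t := L v) (g := fun φ => φ v)
        (fun φ hφ => Fintype.mem_piFinset.1 hφ v)]
      apply Finset.sum_congr rfl
      intro c _
      apply Finset.sum_congr rfl
      intro φ hφ
      rw [(Finset.mem_filter.1 hφ).2, mul_comm]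
    rw [e, WeightTotal, Finset.mul_sum]
    apply Finset.sum_le_sum
    intro v _
    rw [Finset.mul_sum]
    apply Finset.sum_le_sum
    intro c hc
    rw [mul_comm]
    apply mul_le_mul_of_nonneg_left _ (hw v c)
    have := hp.fixc v (Finset.mem_univ v) c hc
    unfold PrS at this
    refine this.trans (le_of_eq ?_)
    congr 1
    rw [hΩ]
    congr!
  by_contra hcon
  have hcon' : ∀ φ, IsLColoring G L φ → ∑ v, w v (φ v) < δ ^ (d + 1) * WeightTotal L w := by
    intro φ hφ
    by_contra h
    exact hcon ⟨φ, hφ, not_lt.1 h⟩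
  have hcol : ∀ φ ∈ Ω, p φ ≠ 0 → IsLColoring G L φ := fun φ h h' =>
    ⟨Fintype.mem_piFinset.1 h, fun u w hadj =>
      hp.proper φ h' u (Finset.mem_univ _) w (Finset.mem_univ _) hadj⟩
  have hsum : ∑ φ ∈ Ω, p φ = 1 := by convert hp.sum_one
  have h2 : ∑ φ ∈ Ω, p φ * ∑ v, w v (φ v) < ∑ φ ∈ Ω, p φ * (δ ^ (d + 1) * WeightTotal L w) := by
    obtain ⟨φ, hφ, hφ'⟩ := Finset.exists_ne_zero_of_sum_ne_zero (by rw [hsum]; norm_num :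
      ∑ φ ∈ Ω, p φ ≠ 0)
    apply Finset.sum_lt_sum
    · intro ψ hψ
      by_cases h0 : p ψ = 0
      · simp [h0]
      · exact mul_le_mul_of_nonneg_left (hcon' ψ (hcol ψ hψ h0)).le (hp.nonneg ψ)
    · exact ⟨φ, hφ, mul_lt_mul_of_pos_left (hcon' φ (hcol φ hφ hφ'))
        (lt_of_le_of_ne (hp.nonneg φ) (Ne.symm hφ'))⟩
  rw [← Finset.sum_mul, hsum, one_mul] at h2
  linarith

open Classical in
lemma two_col {V : Type} [Fintype V] (G : SimpleGraph V)
    (hG : MadLT G (3 / 2)) (L : V → Finset ℕ) (hL : ∀ v, (L v).card = 2) (A : Finset V) :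
    ∃ φ₀ φ₁ : V → ℕ, (∀ v, φ₀ v ≠ φ₁ v ∧ L v = {φ₀ v, φ₁ v}) ∧
      PropOn G A φ₀ ∧ PropOn G A φ₁ := by
  have hLab : ∀ v, ∃ a b, a ≠ b ∧ L v = {a, b} := fun v => Finset.card_eq_two.1 (hL v)
  induction A using Finset.strongInduction with
  | H A ih =>
    by_cases hA : A.Nonempty
    · have hs := dgIn_sum G _ hG A hA
      have : ∃ v ∈ A, dgIn G A v ≤ 1 := by
        by_contra hcon
        push Not at hcon
        have h1 := Finset.card_nsmul_le_sum A (dgIn G A) 2 (fun v hv => hcon v hv)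
        rw [smul_eq_mul] at h1
        have h2 : ((A.card * 2 : ℕ) : ℝ) ≤ ((∑ v ∈ A, dgIn G A v : ℕ) : ℝ) := by exact_mod_cast h1
        push_cast at h2 hs
        have h3 : (0 : ℝ) < A.card := by exact_mod_cast Finset.card_pos.2 hA
        linarith
      obtain ⟨v, hv, hvd⟩ := this
      obtain ⟨φ₀, φ₁, h1, h2, h3⟩ := ih (A.erase v) (Finset.erase_ssubset hv)
      -- choose colors at v
      have hcol : ∃ a b, a ≠ b ∧ L v = {a, b} ∧
          ∀ u ∈ A, G.Adj v u → φ₀ u ≠ a ∧ φ₁ u ≠ b := by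
        obtain ⟨a, b, hab, hLv⟩ := hLab v
        by_cases hu : ∃ u ∈ A, G.Adj v u
        · obtain ⟨u, huA, huv⟩ := hu
          have huniq : ∀ u' ∈ A, G.Adj v u' → u' = u := by
            intro u' hu' hadj
            exact Finset.card_le_one.1 hvd u' (Finset.mem_filter.2 ⟨hu', hadj⟩) u
              (Finset.mem_filter.2 ⟨huA, huv⟩)
          have hne := (h1 u).1
          by_cases hc : φ₀ u ≠ a ∧ φ₁ u ≠ b
          · exact ⟨a, b, hab, hLv, fun u' hu' hadj => by rw [huniq u' hu' hadj]; exact hc⟩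
          · refine ⟨b, a, hab.symm, by rw [hLv, Finset.pair_comm], fun u' hu' hadj => ?_⟩
            rw [huniq u' hu' hadj]
            by_contra hcc
            grind
        · push Not at hu
          exact ⟨a, b, hab, hLv, fun u huA hadj => absurd hadj (hu u huA)⟩
      obtain ⟨a, b, hab, hLv, hnb⟩ := hcol
      have upd : ∀ (φ : V → ℕ) (x : ℕ), PropOn G (A.erase v) φ →
          (∀ u ∈ A, G.Adj v u → φ u ≠ x) → PropOn G A (Function.update φ v x) := by
        intro φ x hφ hx s hs t ht hst
        by_cases hsv : s = v
        · subst hsv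
          rw [Function.update_self, Function.update_of_ne hst.ne']
          exact (hx t ht hst).symm
        · by_cases htv : t = v
          · subst htv
            rw [Function.update_self, Function.update_of_ne hsv]
            exact hx s hs hst.symm
          · rw [Function.update_of_ne hsv, Function.update_of_ne htv]
            exact hφ s (Finset.mem_erase.2 ⟨hsv, hs⟩) t (Finset.mem_erase.2 ⟨htv, ht⟩) hst
      refine ⟨Function.update φ₀ v a, Function.update φ₁ v b, ?_,
        upd _ _ h2 (fun u hu h => (hnb u hu h).1), upd _ _ h3 (fun u hu h => (hnb u hu h).2)⟩
      intro u
      by_cases huv : u = v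
      · subst huv; simpa using ⟨hab, hLv⟩
      · simpa [huv] using h1 u
    · rw [Finset.not_nonempty_iff_eq_empty] at hA
      subst hA
      choose φ₀ φ₁ h using hLab
      exact ⟨φ₀, φ₁, h, by simp [PropOn], by simp [PropOn]⟩

lemma flex_zero {V : Type} [Fintype V] (G : SimpleGraph V)
    (hG : MadLT G (3 / 2)) (L : V → Finset ℕ) (hL : ∀ v, (L v).card = 2) :
    WFlexible G L (1 / 2) := by
  classical
  intro w hw
  obtain ⟨φ₀, φ₁, h, h0, h1⟩ := two_col G hG L hL Finset.univ
  have hW : WeightTotal L w = ∑ v, w v (φ₀ v) + ∑ v, w v (φ₁ v) := by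
    rw [WeightTotal, ← Finset.sum_add_distrib]
    apply Finset.sum_congr rfl
    intro v _
    rw [(h v).2, Finset.sum_pair (h v).1]
  rcases le_total (∑ v, w v (φ₀ v)) (∑ v, w v (φ₁ v)) with hle | hle
  · refine ⟨φ₁, ⟨fun v => by rw [(h v).2]; simp, fun u x hadj =>
      h1 u (Finset.mem_univ _) x (Finset.mem_univ _) hadj⟩, ?_⟩
    rw [hW]; linarith
  · refine ⟨φ₀, ⟨fun v => by rw [(h v).2]; simp, fun u x hadj =>
      h0 u (Finset.mem_univ _) x (Finset.mem_univ _) hadj⟩, ?_⟩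
    rw [hW]; linarith

theorem stmt4 (d : ℕ) :
    ∃ ε : ℝ, 0 < ε ∧
      ∀ (V : Type) [Fintype V] (G : SimpleGraph V) (L : V → Finset ℕ),
        MadLT G (d + 1 + 2 / (d + 4)) → (∀ v, (L v).card = d + 2) → WFlexible G L ε := by
  rcases Nat.eq_zero_or_pos d with rfl | hd
  · refine ⟨1 / 2, by norm_num, ?_⟩
    intro V _ G L hG hL
    apply flex_zero G _ L hL
    convert hG using 1
    norm_num
  · refine ⟨(1 / ((d : ℝ) + 2) ^ (d + 1)) ^ (d + 1), by positivity, ?_⟩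
    intro V _ G L hG hL
    obtain ⟨p, hp⟩ := good_all d hd _ rfl G hG L hL Finset.univ
    exact flex_of_good d _ G L p hp
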